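/- Fix a decomposition tree of X. Let p ∈ X, let p₁ ∈ G with CP(p₁) = (p, q), and let B := RT(p). Then B is not the root of the decomposition tree and q belongs to some block B′ that is a child of the parent of B with B′ ≠ B. -/

import Mathlib

open Finset

attribute [local instance] Classical.propDecidable

/-- A point in the plane: first coordinate is the key, second is the time. -/
abbrev Pt : Type := ℤ × ℤ

/-- `r` lies in the closed axis-parallel rectangle with opposite corners `p` and `q`. -/
def inRect (p q r : Pt) : Prop :=
  min p.1 q.1 ≤ r.1 ∧ r.1 ≤ max p.1 q.1 ∧ min p.2 q.2 ≤ r.2 ∧ r.2 ≤ max p.2 q.2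

/-- `r` lies in the open axis-parallel rectangle with opposite corners `p` and `q`. -/
def inOpenRect (p q r : Pt) : Prop :=
  min p.1 q.1 < r.1 ∧ r.1 < max p.1 q.1 ∧ min p.2 q.2 < r.2 ∧ r.2 < max p.2 q.2

/-- `S` is an arborally satisfied set. -/
def ArbSat (S : Finset Pt) : Prop :=
  ∀ p ∈ S, ∀ q ∈ S, p.1 = q.1 ∨ p.2 = q.2 ∨ ∃ r ∈ S, r ≠ p ∧ r ≠ q ∧ inRect p q r

/-- `X` is the permutation point set `{(σ(t), t) : 1 ≤ t ≤ n}` of some permutation `σ` of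
`{1, …, n}`. -/
def IsPermPointSet (n : ℕ) (X : Finset Pt) : Prop :=
  ∃ σ : Equiv.Perm (Fin n),
    X = Finset.univ.image (fun t : Fin n => ((((σ t : ℕ) : ℤ) + 1, ((t : ℕ) : ℤ) + 1) : Pt))

/-- The points added by GREEDY at time `t`, given the point set `X` and the set `G` of points
added before time `t`: for the point `p` of `X` with time `t` and each point `q` of time `< t`
with a different key such that the rectangle spanned by `p` and `q` contains no other point of
time `< t`, the point `(key q, t)` is added. -/
noncomputable def greedyStep (X G : Finset Pt) (t : ℤ) : Finset Pt :=
  (X.filter (fun p => p.2 = t)).biUnion (fun p =>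
    (((X ∪ G).filter (fun s => s.2 < t)).filter (fun q =>
      q.1 ≠ p.1 ∧ ∀ r ∈ (X ∪ G).filter (fun s => s.2 < t), inRect p q r → r = q)).image
      (fun q => ((q.1, t) : Pt)))

/-- All points added by GREEDY while processing times `1, …, t`. -/
noncomputable def greedyUpTo (X : Finset Pt) : ℕ → Finset Pt
  | 0 => ∅
  | t + 1 => greedyUpTo X t ∪ greedyStep X (greedyUpTo X t) ((t : ℤ) + 1)

/-- The set `G` of points added by GREEDY over the whole execution on a permutation point set
`X` of size `n`. -/
noncomputable def greedyG (n : ℕ) (X : Finset Pt) : Finset Pt := greedyUpTo X n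

/-- `OP r` is the point of `X` processed at the time at which `r` was added; for `r ∈ X`,
`OP r = r`. -/
noncomputable def OP (X : Finset Pt) (r : Pt) : Pt :=
  ((X.filter (fun p => p.2 = r.2)).toList).headI

/-- The first point of `S` above `p`: the point of `S` with the same key as `p`, smaller time,
and the largest such time. -/
noncomputable def firstAbove (S : Finset Pt) (p : Pt) : Pt :=
  (p.1, (((S.filter (fun q => q.1 = p.1 ∧ q.2 < p.2)).image Prod.snd).max).unbotD 0)

/-- The pair `CP(p) = (OP(p), OP(q))` where `q` is the first point of `X ∪ G` above `p`. -/
noncomputable def CP (X G : Finset Pt) (p : Pt) : Pt × Pt :=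
  (OP X p, OP X (firstAbove (X ∪ G) p))

/-- `CP(p) ∈ MMC` (*zig*). -/
def inMMC (X G : Finset Pt) (p : Pt) : Prop :=
  ((CP X G p).1.1 < p.1 ∧ (CP X G p).2.1 < (CP X G p).1.1 ∧ (CP X G p).2.2 < (CP X G p).1.2)
  ∨ (p.1 < (CP X G p).1.1 ∧ (CP X G p).1.1 < (CP X G p).2.1 ∧ (CP X G p).2.2 < (CP X G p).1.2)

/-- `CP(p) ∈ MFC` (*zag*). -/
def inMFC (X G : Finset Pt) (p : Pt) : Prop :=
  ((CP X G p).1.1 < p.1 ∧ p.1 ≤ (CP X G p).2.1 ∧ (CP X G p).2.2 < p.2)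
  ∨ (p.1 < (CP X G p).1.1 ∧ (CP X G p).2.1 ≤ p.1 ∧ (CP X G p).2.2 < p.2)

/-- A pair is good if no point of `X` lies in the open rectangle spanned by it. -/
def IsGoodPair (X : Finset Pt) (pr : Pt × Pt) : Prop :=
  ∀ r ∈ X, ¬ inOpenRect pr.1 pr.2 r

/-- `B` is a block of `X`: the set of points of `X` whose times lie in some interval, whose
keys form a set of consecutive integers; blocks are nonempty. -/
def IsBlock (X B : Finset Pt) : Prop :=
  B.Nonempty ∧ (∃ i j : ℤ, B = X.filter (fun p => i ≤ p.2 ∧ p.2 ≤ j)) ∧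
    ∃ c d : ℤ, B.image Prod.fst = Finset.Icc c d

/-- `Top(B)`: the point of `B` with the smallest time. -/
noncomputable def TopPt (B : Finset Pt) : Pt :=
  ((B.filter (fun p => ∀ q ∈ B, p.2 ≤ q.2)).toList).headI

/-- A decomposition tree of `X`: a rooted tree whose nodes are blocks of `X`, whose root is
`X`, whose leaves are exactly the singleton blocks, and in which the children of every
internal node partition it. -/
structure DecompTree (X : Finset Pt) where
  nodes : Finset (Finset Pt)
  parent : Finset Pt → Finset Pt
  isBlock_nodes : ∀ B ∈ nodes, IsBlock X B
  root_mem : X ∈ nodes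
  parent_mem : ∀ B ∈ nodes, B ≠ X → parent B ∈ nodes
  ssubset_parent : ∀ B ∈ nodes, B ≠ X → B ⊂ parent B
  leaf_iff : ∀ B ∈ nodes, (¬ ∃ C ∈ nodes, C ≠ X ∧ parent C = B) ↔ B.card = 1
  children_partition : ∀ B ∈ nodes, B.card ≠ 1 →
    ∀ x ∈ B, ∃! C, C ∈ nodes ∧ C ≠ X ∧ parent C = B ∧ x ∈ C

/-- The children of a node `B` in a decomposition tree. -/
noncomputable def DecompTree.children {X : Finset Pt} (T : DecompTree X) (B : Finset Pt) :
    Finset (Finset Pt) :=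
  T.nodes.filter (fun C => C ≠ X ∧ T.parent C = B)

/-- `X` is `k`-decomposable: it admits a decomposition tree in which every node has at most
`k` children. -/
def kDecomposable (k : ℕ) (X : Finset Pt) : Prop :=
  ∃ T : DecompTree X, ∀ B ∈ T.nodes, (T.children B).card ≤ k

/-- `RT(p)`: the node of the decomposition tree closest to the root (i.e. containing all
others) among the nodes `B` with `Top(B) = p`. -/
noncomputable def RT {X : Finset Pt} (T : DecompTree X) (p : Pt) : Finset Pt :=
  (((T.nodes.filter (fun B => TopPt B = p)).filter
      (fun B => ∀ C ∈ T.nodes, TopPt C = p → C ⊆ B)).toList).headI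

/-- The points added by GREEDY (`G`) while processing `Top(B)` that lie to the left of
`Top(B)`. -/
noncomputable def leftSet (G B : Finset Pt) : Finset Pt :=
  G.filter (fun s => s.2 = (TopPt B).2 ∧ s.1 < (TopPt B).1)

/-- `Left(B)`: among the points added by GREEDY while processing `Top(B)` with key less than
`key (Top B)`, the one with the largest key (junk if none exists). -/
noncomputable def leftPt (G B : Finset Pt) : Pt :=
  (((leftSet G B).filter (fun s => ∀ r ∈ leftSet G B, r.1 ≤ s.1)).toList).headI

/-- The points added by GREEDY (`G`) while processing `Top(B)` that lie to the right of
`Top(B)`. -/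
noncomputable def rightSet (G B : Finset Pt) : Finset Pt :=
  G.filter (fun s => s.2 = (TopPt B).2 ∧ (TopPt B).1 < s.1)

/-- `Right(B)`: among the points added by GREEDY while processing `Top(B)` with key greater
than `key (Top B)`, the one with the smallest key (junk if none exists). -/
noncomputable def rightPt (G B : Finset Pt) : Pt :=
  (((rightSet G B).filter (fun s => ∀ r ∈ rightSet G B, s.1 ≤ r.1)).toList).headI

/-!
If GREEDY adds a point while processing `p` and `u` is the first point above it, then `p` and `u`
span a rectangle that was empty when `p` was processed. Suppose that `p` lies in a block `A`
without being its top `a`, and that `u` precedes `a`. Before `a` the key range of `A` is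
untouched, so either `a` lies in the rectangle of `p` and `u`, or the rectangle of `a` and `u` was
empty when `a` was processed and GREEDY put a point with the key of `u` at the time of `a`. Both
contradict the emptiness. Hence `u` is not earlier than `a`, and `OP u` lies in `A`. For `A` the
parent of `RT p`, whose top is not `p` by the maximality of `RT p`, the point `q = OP u` of `A` is
earlier than `p = Top (RT p)`, so it lies in another child of `A`.
-/

theorem headI_toList_mem {α : Type*} [Inhabited α] {s : Finset α} (hs : s.Nonempty) :
    s.toList.headI ∈ s := by
  obtain ⟨a, l, hl⟩ := List.exists_cons_of_ne_nil (mt toList_eq_nil.1 hs.ne_empty)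
  rw [← mem_toList, hl]
  exact List.mem_cons_self

section Greedy

variable {n : ℕ} {X S : Finset Pt} {p r u : Pt}

/-- Processing `p` makes GREEDY touch the key of `u`: the rectangle spanned by `p` and `u` contains
no other point of `S` that is earlier than `p`. The points of `S` that are not earlier than `p` are
ignored, so that `S` can be the final set `X ∪ G` at every time. -/
structure Touches (S : Finset Pt) (p u : Pt) : Prop where
  mem : u ∈ S
  time_lt : u.2 < p.2
  key_ne : u.1 ≠ p.1
  eq_of_inRect : ∀ r ∈ S, r.2 < p.2 → inRect p u r → r = u

theorem Touches.congr {S' : Finset Pt} (h : Touches S p u)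
    (hS : ∀ r : Pt, r.2 < p.2 → (r ∈ S ↔ r ∈ S')) : Touches S' p u where
  mem := (hS u h.time_lt).1 h.mem
  time_lt := h.time_lt
  key_ne := h.key_ne
  eq_of_inRect r hr hrp := h.eq_of_inRect r ((hS r hrp).2 hr) hrp

theorem touches_congr {S' : Finset Pt} (hS : ∀ r : Pt, r.2 < p.2 → (r ∈ S ↔ r ∈ S')) :
    Touches S p u ↔ Touches S' p u :=
  ⟨fun h => h.congr hS, fun h => h.congr fun r hr => (hS r hr).symm⟩

theorem Touches.time_le_of_key_eq (h : Touches S p u) (hr : r ∈ S) (hkey : r.1 = u.1)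
    (hrp : r.2 < p.2) : r.2 ≤ u.2 := by
  by_contra! hur
  have hru : r = u := h.eq_of_inRect r hr hrp (by unfold inRect; lia)
  exact hur.ne (congrArg Prod.snd hru.symm)

theorem Touches.of_untouched_uIcc {a : Pt} (h : Touches S p u) (ha : a ∈ S) (hap : a.2 < p.2)
    (hua : u.2 < a.2) (hgap : ∀ r ∈ S, r.2 < a.2 → r.1 ∉ Set.uIcc a.1 p.1) : Touches S a u := by
  have ha_rect : ¬ inRect p u a := fun hrect =>
    hua.ne (congrArg Prod.snd (h.eq_of_inRect a ha hap hrect).symm)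
  have hu_gap := hgap u h.mem hua
  have hp_between : p.1 ∈ Set.uIcc a.1 u.1 := by
    rw [Set.mem_uIcc] at hu_gap ⊢
    unfold inRect at ha_rect
    lia
  refine ⟨h.mem, hua, fun hkey => hu_gap (hkey ▸ Set.left_mem_uIcc), fun r hr hra hrect => ?_⟩
  have hr_gap := hgap r hr hra
  have hr_rect : inRect p u r := by
    rw [Set.mem_uIcc] at hp_between hr_gap
    unfold inRect at hrect ⊢
    lia
  exact h.eq_of_inRect r hr (hra.trans hap) hr_rect

theorem mem_greedyStep {G : Finset Pt} {t : ℤ} :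
    r ∈ greedyStep X G t ↔
      r.2 = t ∧ ∃ p ∈ X, p.2 = r.2 ∧ ∃ u, u.1 = r.1 ∧ Touches (X ∪ G) p u := by
  obtain ⟨k, s⟩ := r
  simp only [greedyStep, mem_biUnion, mem_image, mem_filter, Prod.mk.injEq]
  constructor
  · rintro ⟨p, ⟨hp, rfl⟩, u, ⟨⟨hu, hlt⟩, hne, hempty⟩, rfl, rfl⟩
    exact ⟨rfl, p, hp, rfl, u, rfl, hu, hlt, hne, fun r hr hrp => hempty r ⟨hr, hrp⟩⟩
  · rintro ⟨rfl, p, hp, rfl, u, rfl, h⟩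
    exact ⟨p, ⟨hp, rfl⟩, u,
      ⟨⟨h.mem, h.time_lt⟩, h.key_ne, fun r hr => h.eq_of_inRect r hr.1 hr.2⟩, rfl, rfl⟩

theorem greedyG_succ (n : ℕ) (X : Finset Pt) :
    greedyG (n + 1) X = greedyG n X ∪ greedyStep X (greedyG n X) (n + 1) :=
  rfl

theorem mem_greedyG_succ_iff_of_time_le (hr : r.2 ≤ n) :
    r ∈ greedyG (n + 1) X ↔ r ∈ greedyG n X := by
  rw [greedyG_succ, mem_union, mem_greedyStep]
  exact or_iff_left fun h => by lia

theorem mem_greedyG :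
    r ∈ greedyG n X ↔ (0 < r.2 ∧ r.2 ≤ n) ∧
      ∃ p ∈ X, p.2 = r.2 ∧ ∃ u, u.1 = r.1 ∧ Touches (X ∪ greedyG n X) p u := by
  induction n with
  | zero =>
    simp only [greedyG, greedyUpTo, notMem_empty, false_iff]
    lia
  | succ n ih =>
    have touches_succ : ∀ p u : Pt, p.2 ≤ n + 1 →
        (Touches (X ∪ greedyG n X) p u ↔ Touches (X ∪ greedyG (n + 1) X) p u) := by
      refine fun p u hp => touches_congr fun r hr => ?_
      rw [mem_union, mem_union, mem_greedyG_succ_iff_of_time_le (by lia)]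
    rw [greedyG_succ, mem_union, ih, mem_greedyStep, ← greedyG_succ]
    constructor
    · rintro (⟨hrn, p, hp, hpr, u, hur, h⟩ | ⟨hrn, p, hp, hpr, u, hur, h⟩) <;>
        exact ⟨by lia, p, hp, hpr, u, hur, (touches_succ p u (by lia)).1 h⟩
    · rintro ⟨hrn, p, hp, hpr, u, hur, h⟩
      have h' := (touches_succ p u (by lia)).2 h
      by_cases hr : r.2 ≤ n
      · exact .inl ⟨by lia, p, hp, hpr, u, hur, h'⟩
      · exact .inr ⟨by lia, p, hp, hpr, u, hur, h'⟩

theorem exists_mem_time_eq (hr : r ∈ X ∪ greedyG n X) : ∃ x ∈ X, x.2 = r.2 := by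
  rcases mem_union.1 hr with hr | hr
  · exact ⟨r, hr, rfl⟩
  · obtain ⟨-, p, hp, hpr, -⟩ := mem_greedyG.1 hr
    exact ⟨p, hp, hpr⟩

theorem exists_mem_key_eq_time_le (hr : r ∈ X ∪ greedyG n X) :
    ∃ x ∈ X, x.1 = r.1 ∧ x.2 ≤ r.2 := by
  induction n generalizing r with
  | zero => exact ⟨r, by simpa [greedyG, greedyUpTo] using hr, rfl, le_rfl⟩
  | succ n ih =>
    rw [greedyG_succ, ← union_assoc, mem_union] at hr
    rcases hr with hr | hr
    · exact ih hr
    · obtain ⟨-, p, -, hpr, u, hur, h⟩ := mem_greedyStep.1 hr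
      obtain ⟨x, hx, hxu, hxt⟩ := ih h.mem
      exact ⟨x, hx, hxu.trans hur, (hxt.trans h.time_lt.le).trans hpr.le⟩

theorem OP_eq_of_time_eq {x : Pt} (htime : Set.InjOn Prod.snd (X : Set Pt)) (hx : x ∈ X)
    (hxr : x.2 = r.2) : OP X r = x := by
  have : X.filter (fun p => p.2 = r.2) = {x} := by
    ext y
    simp only [mem_filter, mem_singleton]
    exact ⟨fun h => htime h.1 hx (h.2.trans hxr.symm), by rintro rfl; exact ⟨hx, hxr⟩⟩
  simp [OP, this]

theorem Touches.firstAbove_eq (h : Touches S p u) (hkey : u.1 = r.1) (htime : p.2 = r.2) :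
    firstAbove S r = u := by
  have hmax : ((S.filter fun s => s.1 = r.1 ∧ s.2 < r.2).image Prod.snd).max =
      (u.2 : WithBot ℤ) := by
    refine le_antisymm (Finset.max_le fun t ht => ?_) (le_max (mem_image_of_mem _ ?_))
    · obtain ⟨s, hs, rfl⟩ := mem_image.1 ht
      obtain ⟨hs, hsr, hst⟩ := mem_filter.1 hs
      exact WithBot.coe_le_coe.2 (h.time_le_of_key_eq hs (hsr.trans hkey.symm) (htime ▸ hst))
    · exact mem_filter.2 ⟨h.mem, hkey, htime ▸ h.time_lt⟩
  rw [firstAbove, hmax, WithBot.unbotD_coe, ← hkey]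

theorem exists_touches_of_CP_eq {q : Pt} (htime : Set.InjOn Prod.snd (X : Set Pt))
    (hr : r ∈ greedyG n X) (hCP : CP X (greedyG n X) r = (p, q)) :
    p ∈ X ∧ q ∈ X ∧ p.2 ≤ n ∧ ∃ u, q.2 = u.2 ∧ Touches (X ∪ greedyG n X) p u := by
  obtain ⟨⟨-, hrn⟩, x, hx, hxr, u, hur, h⟩ := mem_greedyG.1 hr
  obtain ⟨y, hy, hyu⟩ := exists_mem_time_eq h.mem
  obtain ⟨hxp, hyq⟩ := Prod.mk.inj hCP
  rw [OP_eq_of_time_eq htime hx hxr] at hxp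
  rw [h.firstAbove_eq hur hxr, OP_eq_of_time_eq htime hy hyu] at hyq
  subst hxp hyq
  exact ⟨hx, hy, hxr.trans_le hrn, u, hyu, h⟩

end Greedy

section Block

variable {n : ℕ} {X B C : Finset Pt}

theorem TopPt_mem_filter (hB : B.Nonempty) :
    TopPt B ∈ B.filter (fun p => ∀ q ∈ B, p.2 ≤ q.2) := by
  obtain ⟨a, ha, hmin⟩ := B.exists_min_image Prod.snd hB
  exact headI_toList_mem ⟨a, mem_filter.2 ⟨ha, hmin⟩⟩

theorem TopPt_mem (hB : B.Nonempty) : TopPt B ∈ B :=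
  (mem_filter.1 (TopPt_mem_filter hB)).1

theorem TopPt_time_le {x : Pt} (hx : x ∈ B) : (TopPt B).2 ≤ x.2 :=
  (mem_filter.1 (TopPt_mem_filter ⟨x, hx⟩)).2 x hx

theorem TopPt_singleton (p : Pt) : TopPt {p} = p :=
  mem_singleton.1 (TopPt_mem (singleton_nonempty p))

theorem IsBlock.nonempty (hB : IsBlock X B) : B.Nonempty :=
  hB.1

theorem IsBlock.subset (hB : IsBlock X B) : B ⊆ X := by
  obtain ⟨-, ⟨i, j, rfl⟩, -⟩ := hB
  exact filter_subset _ _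

theorem IsBlock.mem_of_time_le {x y z : Pt} (hB : IsBlock X B) (hx : x ∈ B) (hy : y ∈ B)
    (hz : z ∈ X) (hxz : x.2 ≤ z.2) (hzy : z.2 ≤ y.2) : z ∈ B := by
  obtain ⟨-, ⟨i, j, rfl⟩, -⟩ := hB
  rw [mem_filter] at hx hy ⊢
  exact ⟨hz, hx.2.1.trans hxz, hzy.trans hy.2.2⟩

theorem IsBlock.ordConnected_keys (hB : IsBlock X B) :
    (Prod.fst '' (B : Set Pt)).OrdConnected := by
  obtain ⟨-, -, c, d, hcd⟩ := hB
  rw [← coe_image, hcd, coe_Icc]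
  exact Set.ordConnected_Icc

theorem IsBlock.subset_or_subset (hB : IsBlock X B) (hC : IsBlock X C)
    (htop : TopPt B = TopPt C) : B ⊆ C ∨ C ⊆ B := by
  by_contra! hcon
  obtain ⟨⟨x, hxB, hxC⟩, ⟨y, hyC, hyB⟩⟩ := hcon.imp not_subset.1 not_subset.1
  rcases le_total x.2 y.2 with hxy | hyx
  · exact hxC (hC.mem_of_time_le (TopPt_mem hC.nonempty) hyC (hB.subset hxB)
      (htop ▸ TopPt_time_le hxB) hxy)
  · exact hyB (hB.mem_of_time_le (TopPt_mem hB.nonempty) hxB (hC.subset hyC)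
      (htop ▸ TopPt_time_le hyC) hyx)

theorem IsBlock.TopPt_time_le_of_key_mem {r : Pt} (hkey : Set.InjOn Prod.fst (X : Set Pt))
    (hB : IsBlock X B) (hr : r ∈ X ∪ greedyG n X) (hrB : r.1 ∈ Prod.fst '' (B : Set Pt)) :
    (TopPt B).2 ≤ r.2 := by
  obtain ⟨x, hxB, hxr⟩ := hrB
  obtain ⟨y, hy, hyr, hyt⟩ := exists_mem_key_eq_time_le hr
  obtain rfl : y = x := hkey hy (hB.subset hxB) (hyr.trans hxr.symm)
  exact (TopPt_time_le hxB).trans hyt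

theorem IsBlock.TopPt_time_le_of_touches {p u : Pt} (hkey : Set.InjOn Prod.fst (X : Set Pt))
    (hpos : ∀ x ∈ X, 0 < x.2) (hB : IsBlock X B) (hp : p ∈ B) (hpn : p.2 ≤ n)
    (htop : (TopPt B).2 < p.2) (h : Touches (X ∪ greedyG n X) p u) : (TopPt B).2 ≤ u.2 := by
  by_contra! hlt
  have haB : TopPt B ∈ B := TopPt_mem hB.nonempty
  have haX : TopPt B ∈ X := hB.subset haB
  have hgap : ∀ r ∈ X ∪ greedyG n X, r.2 < (TopPt B).2 → r.1 ∉ Set.uIcc (TopPt B).1 p.1 :=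
    fun r hr hra hrp => hra.not_ge <| hB.TopPt_time_le_of_key_mem hkey hr <|
      hB.ordConnected_keys.uIcc_subset (Set.mem_image_of_mem _ haB) (Set.mem_image_of_mem _ hp) hrp
  have hau : Touches (X ∪ greedyG n X) (TopPt B) u :=
    h.of_untouched_uIcc (mem_union_left _ haX) htop hlt hgap
  have hadded : ((u.1, (TopPt B).2) : Pt) ∈ X ∪ greedyG n X := mem_union_right _ <|
    mem_greedyG.2 ⟨⟨hpos (TopPt B) haX, htop.le.trans hpn⟩, _, haX, rfl, u, rfl, hau⟩
  have hle := h.time_le_of_key_eq hadded rfl htop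
  exact hlt.not_ge hle

end Block

section Tree

variable {X A : Finset Pt} {p x : Pt}

theorem DecompTree.mem_children {C : Finset Pt} (T : DecompTree X) :
    C ∈ T.children A ↔ C ∈ T.nodes ∧ C ≠ X ∧ T.parent C = A :=
  mem_filter

theorem DecompTree.exists_mem_children (T : DecompTree X) (hA : A ∈ T.nodes) (hx : x ∈ A)
    (hne : A ≠ {x}) : ∃ C ∈ T.children A, x ∈ C := by
  have hcard : A.card ≠ 1 := fun h => by
    obtain ⟨y, rfl⟩ := card_eq_one.1 h
    exact hne (congrArg _ (mem_singleton.1 hx).symm)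
  obtain ⟨C, ⟨hC, hCX, hCA, hxC⟩, -⟩ := T.children_partition A hA hcard x hx
  exact ⟨C, T.mem_children.2 ⟨hC, hCX, hCA⟩, hxC⟩

theorem DecompTree.singleton_mem_nodes (T : DecompTree X) (hp : p ∈ X) : {p} ∈ T.nodes := by
  obtain ⟨B, hB⟩ := (T.nodes.filter (p ∈ ·)).exists_minimal ⟨X, mem_filter.2 ⟨T.root_mem, hp⟩⟩
  obtain ⟨hBn, hpB⟩ := mem_filter.1 hB.prop
  by_contra hsing
  obtain ⟨C, hCB, hpC⟩ := T.exists_mem_children hBn hpB (by rintro rfl; exact hsing hBn)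
  obtain ⟨hC, hCX, rfl⟩ := T.mem_children.1 hCB
  exact hB.not_lt (mem_filter.2 ⟨hC, hpC⟩) (T.ssubset_parent C hC hCX)

theorem isGreatest_RT (T : DecompTree X) (hp : p ∈ X) :
    IsGreatest {B | B ∈ T.nodes ∧ TopPt B = p} (RT T p) := by
  obtain ⟨B, hB⟩ := (T.nodes.filter fun B => TopPt B = p).exists_maximal
    ⟨{p}, mem_filter.2 ⟨T.singleton_mem_nodes hp, TopPt_singleton p⟩⟩
  obtain ⟨hBn, hBp⟩ := mem_filter.1 hB.prop
  have hBmax : ∀ C ∈ T.nodes, TopPt C = p → C ⊆ B := fun C hC hCp =>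
    ((T.isBlock_nodes C hC).subset_or_subset (T.isBlock_nodes B hBn) (hCp.trans hBp.symm)).elim id
      (hB.le_of_ge (mem_filter.2 ⟨hC, hCp⟩))
  have hRT : RT T p ∈ (T.nodes.filter fun B => TopPt B = p).filter
      fun B => ∀ C ∈ T.nodes, TopPt C = p → C ⊆ B :=
    headI_toList_mem ⟨B, mem_filter.2 ⟨hB.prop, hBmax⟩⟩
  rw [mem_filter, mem_filter] at hRT
  exact ⟨hRT.1, fun C hC => hRT.2 C hC.1 hC.2⟩

theorem RT_mem_nodes (T : DecompTree X) (hp : p ∈ X) : RT T p ∈ T.nodes :=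
  (isGreatest_RT T hp).1.1

theorem TopPt_RT (T : DecompTree X) (hp : p ∈ X) : TopPt (RT T p) = p :=
  (isGreatest_RT T hp).1.2

theorem mem_RT (T : DecompTree X) (hp : p ∈ X) : p ∈ RT T p := by
  have hne := (T.isBlock_nodes _ (RT_mem_nodes T hp)).nonempty
  simpa only [TopPt_RT T hp] using TopPt_mem hne

theorem time_le_of_mem_RT (T : DecompTree X) (hp : p ∈ X) (hx : x ∈ RT T p) : p.2 ≤ x.2 := by
  simpa only [TopPt_RT T hp] using TopPt_time_le hx

theorem TopPt_parent_RT_time_lt (htime : Set.InjOn Prod.snd (X : Set Pt)) (T : DecompTree X)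
    (hp : p ∈ X) (hne : RT T p ≠ X) : (TopPt (T.parent (RT T p))).2 < p.2 := by
  have hBn := RT_mem_nodes T hp
  have hAn := T.parent_mem _ hBn hne
  have hBA := T.ssubset_parent _ hBn hne
  have hAb := T.isBlock_nodes _ hAn
  refine (TopPt_time_le (hBA.subset (mem_RT T hp))).lt_of_ne fun heq => ?_
  refine hBA.not_subset ((isGreatest_RT T hp).2 ⟨hAn, ?_⟩)
  exact htime (hAb.subset (TopPt_mem hAb.nonempty)) hp heq

theorem pair_in_sibling_general {n : ℕ} {q r : Pt} (hkey : Set.InjOn Prod.fst (X : Set Pt))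
    (htime : Set.InjOn Prod.snd (X : Set Pt)) (hpos : ∀ x ∈ X, 0 < x.2) (T : DecompTree X)
    (hr : r ∈ greedyG n X) (hCP : CP X (greedyG n X) r = (p, q)) :
    RT T p ≠ X ∧ ∃ B' ∈ T.children (T.parent (RT T p)), B' ≠ RT T p ∧ q ∈ B' := by
  obtain ⟨hp, hq, hpn, u, hqu, hpu⟩ := exists_touches_of_CP_eq htime hr hCP
  have hqp : q.2 < p.2 := hqu ▸ hpu.time_lt
  have hqB : q ∉ RT T p := fun h => hqp.not_ge (time_le_of_mem_RT T hp h)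
  have hBX : RT T p ≠ X := fun h => hqB (h.symm.subset hq)
  have hBn := RT_mem_nodes T hp
  have hAn := T.parent_mem _ hBn hBX
  have hAb := T.isBlock_nodes _ hAn
  have hpA : p ∈ T.parent (RT T p) := (T.ssubset_parent _ hBn hBX).subset (mem_RT T hp)
  have htop := TopPt_parent_RT_time_lt htime T hp hBX
  have htop_u := hAb.TopPt_time_le_of_touches hkey hpos hpA hpn htop hpu
  have hqA : q ∈ T.parent (RT T p) :=
    hAb.mem_of_time_le (TopPt_mem hAb.nonempty) hpA hq (htop_u.trans hqu.ge) hqp.le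
  obtain ⟨C, hCA, hqC⟩ := T.exists_mem_children hAn hqA fun h =>
    hqp.ne' (congrArg Prod.snd (mem_singleton.1 (h.subset hpA)))
  exact ⟨hBX, C, hCA, fun h => hqB (h ▸ hqC), hqC⟩

end Tree

section Permutation

variable {n : ℕ} {X : Finset Pt}

theorem IsPermPointSet.injOn_key (hX : IsPermPointSet n X) :
    Set.InjOn Prod.fst (X : Set Pt) := by
  obtain ⟨σ, rfl⟩ := hX
  simp [Set.InjOn, Fin.val_inj]

theorem IsPermPointSet.injOn_time (hX : IsPermPointSet n X) :
    Set.InjOn Prod.snd (X : Set Pt) := by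
  obtain ⟨σ, rfl⟩ := hX
  simp [Set.InjOn, Fin.val_inj]

theorem IsPermPointSet.time_pos (hX : IsPermPointSet n X) : ∀ x ∈ X, 0 < x.2 := by
  obtain ⟨σ, rfl⟩ := hX
  simp only [mem_image, mem_univ, true_and, forall_exists_index, forall_apply_eq_imp_iff]
  lia

end Permutation

/-- Fix a decomposition tree `T` of `X`. Let `p ∈ X`, `p₁ ∈ G` with
`CP(p₁) = (p, q)`, and `B := RT(p)`. Then `B` is not the root and `q` belongs to some block
`B'` that is a child of the parent of `B` with `B' ≠ B`. -/
theorem pair_in_sibling (n : ℕ) (X : Finset Pt) (hX : IsPermPointSet n X)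
    (T : DecompTree X) (p : Pt) (hp : p ∈ X) (p₁ q : Pt) (hp₁ : p₁ ∈ greedyG n X)
    (hCP : CP X (greedyG n X) p₁ = (p, q)) :
    RT T p ≠ X ∧
      ∃ B' ∈ T.children (T.parent (RT T p)), B' ≠ RT T p ∧ q ∈ B' :=
  pair_in_sibling_general hX.injOn_key hX.injOn_time hX.time_pos T hp₁ hCP
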